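/- Let n ≥ 1, let θ be a bounded measurable function supported in Q = (-1/2,1/2)^n with ∫θ = 1, and let ω : ℝ^n → [0,∞) be a radial nonincreasing function (ω(x) = w(|x|) with w nonincreasing) satisfying ∫_{ℝ^n} ω(x)/(1+|x|)^{n+1} dx < ∞. Define Ω(R) = ∫_{Q} ω(y) dy + ∫_{1<|y|<R} ω(y)/|y|^n dy for R ≥ 0. Let (λ_j)_{j∈ℤ^n} be real numbers with ∑_j |λ_j| < ∞ and set g = ∑_{j∈ℤ^n} λ_j (χ_{Q_j} − θ). (i) If ∑_{j∈ℤ^n} |λ_j| Ω(|j|) < ∞ then ∫_{ℝ^n} 𝓜_φ g(x) ω(x) dx < ∞ for every smooth φ supported in the closed unit ball with ∫φ = 1. (ii) Conversely, if all λ_j are nonnegative and ∫_{ℝ^n} 𝓜_φ g(x) ω(x) dx < ∞ for every such φ, then ∑_{j∈ℤ^n} λ_j Ω(|j|) < ∞. -/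

import Mathlib

open MeasureTheory Real Set Metric ENNReal

noncomputable section

/-- `ℝ^n` with the Euclidean norm. -/
abbrev En (n : ℕ) := EuclideanSpace ℝ (Fin n)

/-- `ln₊ t = max (ln t) 0`. -/
def lnp (t : ℝ) : ℝ := max (Real.log t) 0

/-- The unit cube `Q = (-1/2, 1/2)^n`. -/
def unitQ (n : ℕ) : Set (En n) := {x | ∀ i, -(1/2 : ℝ) < x i ∧ x i < 1/2}

/-- The dilate `φ_t(y) = t^{-n} φ(y/t)` convolved with `f` at `x`:
`(φ_t ∗ f)(x) = ∫ t^{-n} φ((x-y)/t) f(y) dy`. -/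
def phiConv (n : ℕ) (φ f : En n → ℝ) (t : ℝ) (x : En n) : ℝ :=
  ∫ y, (t ^ n)⁻¹ * φ (t⁻¹ • (x - y)) * f y

/-- The maximal function `𝓜_φ f(x) = sup_{t>0} |(φ_t ∗ f)(x)|`. -/
def Mphi (n : ℕ) (φ f : En n → ℝ) (x : En n) : ℝ :=
  ⨆ t : {t : ℝ // 0 < t}, |phiConv n φ f t.1 x|

/-- A smooth function supported in the closed unit ball with integral `1`. -/
def IsTestFun (n : ℕ) (φ : En n → ℝ) : Prop :=
  ContDiff ℝ (⊤ : ℕ∞) φ ∧ (∀ x, x ∉ Metric.closedBall (0 : En n) 1 → φ x = 0) ∧ (∫ x, φ x) = 1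

/-- Membership in the Hardy space `H^1(ℝ^n)`: the maximal function `𝓜_φ f` is
integrable for every admissible `φ`. -/
def MemH1 (n : ℕ) (f : En n → ℝ) : Prop :=
  ∀ φ : En n → ℝ, IsTestFun n φ → Integrable (Mphi n φ f)

/-- The cube `Q_k = k + Q` for `k ∈ ℤ^n`. -/
def Qk (n : ℕ) (k : Fin n → ℤ) : Set (En n) :=
  {x | ∀ i, (k i : ℝ) - 1/2 < x i ∧ x i < (k i : ℝ) + 1/2}

/-- The lattice point `k ∈ ℤ^n` viewed as a point of `ℝ^n`. -/
def zv (n : ℕ) (k : Fin n → ℤ) : En n :=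
  (EuclideanSpace.equiv (Fin n) ℝ).symm (fun i => (k i : ℝ))

/-- `μ_k = ‖f_k‖_{L^1} = ∫_{Q_k} |f|`. -/
def muk (n : ℕ) (f : En n → ℝ) (k : Fin n → ℤ) : ℝ := ∫ x in Qk n k, |f x|

/-- The local Hardy–Littlewood maximal function
`M^loc f(x) = sup_{0<r<1} r^{-n} ∫_{|y-x|<r} |f(y)| dy`. -/
def Mloc (n : ℕ) (f : En n → ℝ) (x : En n) : ℝ :=
  ⨆ r : Set.Ioo (0 : ℝ) 1, ((r : ℝ) ^ n)⁻¹ * ∫ y in Metric.ball x (r : ℝ), |f y|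

/-- The function `Ω(R) = ∫_Q ω + ∫_{1<|y|<R} ω(y)/|y|^n dy`. -/
def OmegaFun (n : ℕ) (ω : En n → ℝ) (R : ℝ) : ℝ :=
  (∫ y in unitQ n, ω y) + ∫ y in {y : En n | 1 < ‖y‖ ∧ ‖y‖ < R}, ω y / ‖y‖ ^ n

lemma phi_facts {n : ℕ} {φ : En n → ℝ} (h : IsTestFun n φ) :
    Continuous φ ∧ Integrable φ ∧ (∃ M, 0 ≤ M ∧ ∀ x, |φ x| ≤ M) ∧
      (∃ L, 0 ≤ L ∧ ∀ x y, |φ x - φ y| ≤ L * ‖x - y‖) ∧ ∀ x, 1 < ‖x‖ → φ x = 0 := by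
  obtain ⟨hc, hs, hi⟩ := h
  have hcs : HasCompactSupport φ := HasCompactSupport.intro (isCompact_closedBall _ _) hs
  obtain ⟨M, hM⟩ := hcs.exists_bound_of_continuous hc.continuous
  obtain ⟨L, hL⟩ := ContDiff.lipschitzWith_of_hasCompactSupport hcs hc (by simp)
  refine ⟨hc.continuous, hc.continuous.integrable_of_hasCompactSupport hcs, ⟨M, ?_, ?_⟩, ⟨L, L.2, ?_⟩, ?_⟩
  · exact (norm_nonneg _).trans (hM 0)
  · exact hM
  · intro x y
    have := hL.dist_le_mul x y
    simpa [Real.dist_eq, dist_eq_norm] using this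
  · intro x hx
    exact hs x (by simpa using hx)

lemma conv_bdd {n : ℕ} {φ f : En n → ℝ} (hφ : Integrable φ) {C : ℝ}
    (hf : ∀ x, |f x| ≤ C) {t : ℝ} (ht : 0 < t) (x : En n) :
    |phiConv n φ f t x| ≤ C * ∫ y, |φ y| := by
  have hi : Integrable (fun y => |φ (t⁻¹ • (x - y))|) := by
    have h1 : Integrable (fun y => φ (t⁻¹ • y)) := (integrable_comp_smul_iff volume φ (by positivity)).2 hφ
    exact (h1.comp_sub_left x).abs
  have he : ∫ y, |φ (t⁻¹ • (x - y))| = t ^ n * ∫ y, |φ y| := by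
    rw [integral_sub_left_eq_self (fun y => |φ (t⁻¹ • y)|) volume x,
      Measure.integral_comp_smul volume (fun y => |φ y|)]
    simp [abs_of_pos ht]
  have h2 : C * ∫ y, |φ y| = ∫ y, C * (t^n)⁻¹ * |φ (t⁻¹ • (x - y))| := by
    rw [integral_const_mul, he]; field_simp
  rw [h2, ← Real.norm_eq_abs, phiConv]
  apply norm_integral_le_of_norm_le (hi.const_mul _)
  refine Filter.Eventually.of_forall fun y => ?_
  have := hf y
  rw [norm_mul, norm_mul, Real.norm_eq_abs, Real.norm_eq_abs, Real.norm_eq_abs,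
    abs_of_pos (by positivity : 0 < (t^n)⁻¹)]
  have h3 : 0 ≤ (t^n)⁻¹ * |φ (t⁻¹ • (x - y))| := by positivity
  nlinarith

lemma phi_zero {n : ℕ} {φ : En n → ℝ} (hz : ∀ x, 1 < ‖x‖ → φ x = 0) {t : ℝ} (ht : 0 < t)
    {z : En n} (h : t < ‖z‖) : φ (t⁻¹ • z) = 0 := by
  apply hz
  rw [norm_smul, norm_inv, Real.norm_eq_abs, abs_of_pos ht, ← div_eq_inv_mul, lt_div_iff₀ ht]
  linarith

lemma conv_far {n : ℕ} {φ f : En n → ℝ} {M : ℝ} (hM0 : 0 ≤ M) (hM : ∀ x, |φ x| ≤ M)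
    (hz : ∀ x, 1 < ‖x‖ → φ x = 0) (hf : Integrable f) {p : En n} {s : ℝ} (hs : 0 < s)
    (hfs : ∀ y, s < ‖y - p‖ → f y = 0) {t : ℝ} (ht : 0 < t) {x : En n} (hx : 2 * s ≤ ‖x - p‖) :
    |phiConv n φ f t x| ≤ M * (∫ y, |f y|) * (2 / ‖x - p‖) ^ n := by
  have hd : 0 < ‖x - p‖ := by linarith
  have h0 : 0 ≤ ∫ y, |f y| := integral_nonneg fun y => abs_nonneg _
  by_cases htd : t < ‖x - p‖ / 2
  · have : phiConv n φ f t x = 0 := by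
      unfold phiConv
      rw [← integral_zero (En n) ℝ]
      congr 1; ext y
      by_cases hy : s < ‖y - p‖
      · simp [hfs y hy]
      · have : ‖x - p‖ ≤ ‖x - y‖ + ‖y - p‖ := norm_sub_le_norm_sub_add_norm_sub ..
        rw [phi_zero hz ht (by linarith)]; simp
    rw [this, abs_zero]; positivity
  · push Not at htd
    have h1 : (t ^ n)⁻¹ ≤ (2 / ‖x - p‖) ^ n := by
      rw [← inv_pow]
      apply pow_le_pow_left₀ (by positivity)
      rw [← inv_div]
      exact inv_anti₀ (by positivity) htd
    have h2 : M * (∫ y, |f y|) * (2 / ‖x - p‖) ^ n = ∫ y, (M * (2 / ‖x - p‖) ^ n) * |f y| := by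
      rw [integral_const_mul]; ring
    rw [h2, ← Real.norm_eq_abs, phiConv]
    apply norm_integral_le_of_norm_le (hf.abs.const_mul _)
    refine Filter.Eventually.of_forall fun y => ?_
    rw [norm_mul, norm_mul, Real.norm_eq_abs, Real.norm_eq_abs, Real.norm_eq_abs,
      abs_of_pos (by positivity : 0 < (t^n)⁻¹)]
    apply mul_le_mul_of_nonneg_right _ (abs_nonneg _)
    rw [mul_comm M]
    exact mul_le_mul h1 (hM _) (abs_nonneg _) (by positivity)

lemma conv_sub_const {n : ℕ} {φ f : En n → ℝ} {M : ℝ} (hc : Continuous φ) (hM : ∀ x, |φ x| ≤ M)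
    (hf : Integrable f) (hf0 : ∫ y, f y = 0) (t : ℝ) (x : En n) (b : ℝ) :
    phiConv n φ f t x = ∫ y, (t ^ n)⁻¹ * (φ (t⁻¹ • (x - y)) - b) * f y := by
  have hi : Integrable (fun y => (t ^ n)⁻¹ * φ (t⁻¹ • (x - y)) * f y) := by
    apply hf.bdd_mul (c := |(t ^ n)⁻¹| * M)
    · exact (by fun_prop : Continuous _).aestronglyMeasurable
    · refine Filter.Eventually.of_forall fun y => ?_
      rw [norm_mul]
      exact mul_le_mul_of_nonneg_left (hM _) (abs_nonneg _)
  have : ∀ y, (t ^ n)⁻¹ * (φ (t⁻¹ • (x - y)) - b) * f y =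
     (t ^ n)⁻¹ * φ (t⁻¹ • (x - y)) * f y - ((t ^ n)⁻¹ * b) * f y := fun y => by ring
  simp_rw [this]
  rw [integral_sub hi (hf.const_mul _), integral_const_mul, hf0]
  simp [phiConv]

lemma conv_cancel {n : ℕ} {φ f : En n → ℝ} {M L : ℝ} (hc : Continuous φ) (hM : ∀ x, |φ x| ≤ M)
    (hL0 : 0 ≤ L) (hL : ∀ x y, |φ x - φ y| ≤ L * ‖x - y‖)
    (hz : ∀ x, 1 < ‖x‖ → φ x = 0) (hf : Integrable f) (hf0 : ∫ y, f y = 0) {ρ : ℝ} (hρ : 0 < ρ)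
    (hfs : ∀ y, ρ < ‖y‖ → f y = 0) {t : ℝ} (ht : 0 < t) {x : En n} (hx : 2 * ρ ≤ ‖x‖) :
    |phiConv n φ f t x| ≤ L * ρ * (∫ y, |f y|) * (2 / ‖x‖) ^ (n + 1) := by
  have hd : 0 < ‖x‖ := by linarith
  have h0 : 0 ≤ ∫ y, |f y| := integral_nonneg fun y => abs_nonneg _
  rw [conv_sub_const hc hM hf hf0 t x (φ (t⁻¹ • x))]
  by_cases htd : t < ‖x‖ / 2
  · have : ∫ y, (t ^ n)⁻¹ * (φ (t⁻¹ • (x - y)) - φ (t⁻¹ • x)) * f y = 0 := by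
      rw [← integral_zero (En n) ℝ]
      congr 1; ext y
      by_cases hy : ρ < ‖y‖
      · simp [hfs y hy]
      · have : ‖x‖ ≤ ‖x - y‖ + ‖y‖ := norm_le_norm_sub_add ..
        rw [phi_zero hz ht (by linarith), phi_zero hz ht (by linarith)]; simp
    rw [this, abs_zero]; positivity
  · push Not at htd
    have h1 : (t ^ (n + 1))⁻¹ ≤ (2 / ‖x‖) ^ (n + 1) := by
      rw [← inv_pow]
      apply pow_le_pow_left₀ (by positivity)
      rw [← inv_div]
      exact inv_anti₀ (by positivity) htd
    have h2 : L * ρ * (∫ y, |f y|) * (2 / ‖x‖) ^ (n + 1)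
        = ∫ y, (L * ρ * (2 / ‖x‖) ^ (n + 1)) * |f y| := by
      rw [integral_const_mul]; ring
    rw [h2, ← Real.norm_eq_abs]
    apply norm_integral_le_of_norm_le (hf.abs.const_mul _)
    refine Filter.Eventually.of_forall fun y => ?_
    by_cases hy : ρ < ‖y‖
    · simp [hfs y hy]
    push Not at hy
    rw [norm_mul, norm_mul, Real.norm_eq_abs, Real.norm_eq_abs, Real.norm_eq_abs,
      abs_of_pos (by positivity : 0 < (t^n)⁻¹)]
    apply mul_le_mul_of_nonneg_right _ (abs_nonneg _)
    have h3 := hL (t⁻¹ • (x - y)) (t⁻¹ • x)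
    rw [← smul_sub, norm_smul, norm_inv, Real.norm_eq_abs, abs_of_pos ht, sub_sub_cancel_left,
      norm_neg] at h3
    calc (t^n)⁻¹ * |φ (t⁻¹ • (x - y)) - φ (t⁻¹ • x)| ≤ (t^n)⁻¹ * (L * (t⁻¹ * ρ)) := by
          gcongr
          exact h3.trans (by gcongr)
      _ = L * ρ * (t ^ (n+1))⁻¹ := by rw [pow_succ, mul_inv]; ring
      _ ≤ _ := by gcongr

lemma Qk_meas (n : ℕ) (k : Fin n → ℤ) : MeasurableSet (Qk n k) := by
  have : Qk n k = ⋂ i, {x : En n | (k i : ℝ) - 1/2 < x i ∧ x i < (k i : ℝ) + 1/2} := by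
    ext x; simp [Qk]
  rw [this]
  refine MeasurableSet.iInter fun i => ?_
  have h : Measurable (fun x : En n => x i) := by fun_prop
  exact (measurableSet_lt measurable_const h).inter (measurableSet_lt h measurable_const)

lemma Qk_vol (n : ℕ) (k : Fin n → ℤ) : volume (Qk n k) = 1 := by
  have h := PiLp.volume_preserving_ofLp (Fin n)
  have : Qk n k = WithLp.ofLp ⁻¹' (Set.univ.pi fun i => Ioo ((k i : ℝ) - 1/2) ((k i : ℝ) + 1/2)) := by
    ext x; simp [Qk]
  rw [this, h.measure_preimage (MeasurableSet.univ_pi fun i => measurableSet_Ioo).nullMeasurableSet,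
    Real.volume_pi_Ioo]
  simp; norm_num

lemma Qk_norm {n : ℕ} {k : Fin n → ℤ} {x : En n} (hx : x ∈ Qk n k) : ‖x - zv n k‖ ≤ √n := by
  rw [EuclideanSpace.norm_eq]
  apply Real.sqrt_le_sqrt
  calc ∑ i, ‖(x - zv n k) i‖ ^ 2 ≤ ∑ i : Fin n, (1 : ℝ) := by
        apply Finset.sum_le_sum
        intro i _
        have := hx i
        have h2 : (x - zv n k) i = x i - k i := by simp [zv]
        rw [h2, Real.norm_eq_abs, sq_abs]
        nlinarith
    _ = n := by simp

lemma unitQ_eq (n : ℕ) : unitQ n = Qk n 0 := by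
  ext x; simp [unitQ, Qk]

lemma zv_zero (n : ℕ) : zv n 0 = 0 := by
  ext i; simp [zv]

/-- atom -/
def aj (n : ℕ) (θ : En n → ℝ) (j : Fin n → ℤ) (x : En n) : ℝ :=
  (Qk n j).indicator (1 : En n → ℝ) x - θ x

lemma ind_bd {n : ℕ} (j : Fin n → ℤ) (x : En n) : |(Qk n j).indicator (1 : En n → ℝ) x| ≤ 1 := by
  by_cases h : x ∈ Qk n j <;> simp [h]

lemma ind_int {n : ℕ} (j : Fin n → ℤ) : Integrable ((Qk n j).indicator (1 : En n → ℝ)) :=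
  (integrable_indicator_iff (Qk_meas n j)).2
    (integrableOn_const (by rw [Qk_vol]; simp) : IntegrableOn (fun _ => (1:ℝ)) _ _)

lemma ind_int1 {n : ℕ} (j : Fin n → ℤ) : ∫ x, (Qk n j).indicator (1 : En n → ℝ) x = 1 := by
  rw [integral_indicator_one (Qk_meas n j)]
  simp [Measure.real, Qk_vol]

lemma ind_supp {n : ℕ} (j : Fin n → ℤ) (y : En n) (h : √n < ‖y - zv n j‖) :
    (Qk n j).indicator (1 : En n → ℝ) y = 0 := by
  rw [indicator_of_notMem]
  intro hy
  exact absurd (Qk_norm hy) (by linarith)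

lemma ind_abs_int {n : ℕ} (j : Fin n → ℤ) : ∫ x, |(Qk n j).indicator (1 : En n → ℝ) x| = 1 := by
  rw [← ind_int1 j]
  congr 1; ext x
  exact abs_of_nonneg (indicator_nonneg (fun _ _ => zero_le_one) x)

lemma decay_bd {n : ℕ} (hn : 1 ≤ n) {φ : En n → ℝ} (h : IsTestFun n φ) {C A : ℝ} (hC : 0 ≤ C)
    (hA : 0 ≤ A) : ∃ K, 0 ≤ K ∧ ∀ (p : En n) (f : En n → ℝ), Integrable f → (∀ x, |f x| ≤ C) →
      (∫ x, |f x|) ≤ A → (∀ y, √n < ‖y - p‖ → f y = 0) → ∀ t, 0 < t → ∀ x,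
      |phiConv n φ f t x| ≤ K / (1 + ‖x - p‖) ^ n := by
  obtain ⟨hc, hi, ⟨M, hM0, hM⟩, -, hz⟩ := phi_facts h
  have hs : 1 ≤ √(n:ℝ) := Real.one_le_sqrt.2 (by exact_mod_cast hn)
  set s := √(n:ℝ)
  have hI : 0 ≤ ∫ y, |φ y| := integral_nonneg fun y => abs_nonneg _
  refine ⟨C * (∫ y, |φ y|) * (1 + 2 * s) ^ n + M * A * 4 ^ n, by positivity, ?_⟩
  intro p f hf hfC hfA hfs t ht x
  rw [le_div_iff₀ (by positivity)]
  by_cases hx : 2 * s ≤ ‖x - p‖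
  · have h1 := conv_far hM0 hM hz hf (by linarith) hfs ht hx
    have h2 : (1 + ‖x - p‖) ^ n ≤ (2 * ‖x - p‖) ^ n := by gcongr; linarith
    have hpos : 0 < ‖x - p‖ := by linarith
    calc _ ≤ (M * A * (2 / ‖x - p‖) ^ n) * (2 * ‖x - p‖) ^ n := by
          gcongr
          exact h1.trans (by gcongr)
      _ = M * A * 4 ^ n := by
          rw [mul_assoc, ← mul_pow]; congr 2; field_simp; norm_num
      _ ≤ _ := by
          have : 0 ≤ C * (∫ y, |φ y|) * (1 + 2 * s) ^ n := by positivity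
          linarith
  · push Not at hx
    have h1 := conv_bdd hi hfC ht x
    calc _ ≤ (C * (∫ y, |φ y|)) * (1 + 2 * s) ^ n := by gcongr
      _ ≤ _ := by
          have : 0 ≤ M * A * 4 ^ n := by positivity
          linarith

lemma conv_int {n : ℕ} {φ f : En n → ℝ} {M : ℝ} (hc : Continuous φ) (hM : ∀ x, |φ x| ≤ M)
    (hf : Integrable f) (t : ℝ) (x : En n) :
    Integrable (fun y => (t ^ n)⁻¹ * φ (t⁻¹ • (x - y)) * f y) := by
  apply hf.bdd_mul (c := |(t ^ n)⁻¹| * M)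
  · exact (by fun_prop : Continuous _).aestronglyMeasurable
  · refine Filter.Eventually.of_forall fun y => ?_
    rw [norm_mul]
    exact mul_le_mul_of_nonneg_left (hM _) (abs_nonneg _)

lemma th_int {n : ℕ} {θ : En n → ℝ} (hθmeas : Measurable θ) {C : ℝ} (hC : ∀ x, |θ x| ≤ C)
    (hθsupp : ∀ x, x ∉ unitQ n → θ x = 0) : Integrable θ := by
  have : IntegrableOn θ (Qk n 0) := IntegrableOn.of_bound (by rw [Qk_vol]; simp)
    hθmeas.aestronglyMeasurable C (Filter.Eventually.of_forall hC)
  rw [unitQ_eq] at hθsupp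
  exact (integrableOn_iff_integrable_of_support_subset (by
    intro x hx; by_contra h; exact hx (hθsupp x h))).1 this

lemma th_supp {n : ℕ} {θ : En n → ℝ}
    (hθsupp : ∀ x, x ∉ unitQ n → θ x = 0) (y : En n) (h : √n < ‖y‖) : θ y = 0 := by
  apply hθsupp
  rw [unitQ_eq]
  intro hy
  have := Qk_norm hy
  rw [zv_zero, sub_zero] at this
  linarith

lemma aj_int {n : ℕ} {θ : En n → ℝ} (h : Integrable θ) (j : Fin n → ℤ) : Integrable (aj n θ j) :=
  (ind_int j).sub h

lemma aj_int0 {n : ℕ} {θ : En n → ℝ} (h : Integrable θ) (h1 : ∫ x, θ x = 1) (j : Fin n → ℤ) :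
    ∫ x, aj n θ j x = 0 := by
  unfold aj
  rw [integral_sub (ind_int j) h, ind_int1, h1, sub_self]

lemma aj_absint {n : ℕ} {θ : En n → ℝ} (h : Integrable θ) (j : Fin n → ℤ) :
    ∫ x, |aj n θ j x| ≤ 1 + ∫ x, |θ x| := by
  rw [← ind_abs_int j, ← integral_add (ind_int j).abs h.abs]
  apply integral_mono (aj_int h j).abs ((ind_int j).abs.add h.abs)
  intro x
  exact abs_sub _ _

lemma aj_conv {n : ℕ} (hn : 1 ≤ n) {φ θ : En n → ℝ} (h : IsTestFun n φ) (hθ : Integrable θ)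
    {C : ℝ} (hC : ∀ x, |θ x| ≤ C) (hθsupp : ∀ x, x ∉ unitQ n → θ x = 0) :
    ∃ K, 0 ≤ K ∧ ∀ j t, 0 < t → ∀ x, |phiConv n φ (aj n θ j) t x| ≤
      K / (1 + ‖x‖) ^ n + K / (1 + ‖x - zv n j‖) ^ n := by
  have hC0 : 0 ≤ C := (abs_nonneg _).trans (hC 0)
  have hI : 0 ≤ ∫ y, |θ y| := integral_nonneg fun y => abs_nonneg _
  obtain ⟨K, hK0, hK⟩ := decay_bd hn h (C := C + 1) (A := 1 + ∫ y, |θ y|) (by linarith) (by linarith)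
  refine ⟨K, hK0, fun j t ht x => ?_⟩
  obtain ⟨hc, hi, ⟨M, hM0, hM⟩, -, hz⟩ := phi_facts h
  have h1 := hK 0 θ hθ (fun x => (hC x).trans (by linarith)) (by linarith)
    (fun y hy => th_supp hθsupp y (by simpa using hy)) t ht x
  have h2 := hK (zv n j) _ (ind_int j) (fun x => (ind_bd j x).trans (by linarith))
    (by rw [ind_abs_int]; linarith) (ind_supp j) t ht x
  have h3 : phiConv n φ (aj n θ j) t x =
      phiConv n φ ((Qk n j).indicator (1 : En n → ℝ)) t x - phiConv n φ θ t x := by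
    unfold phiConv aj
    rw [← integral_sub (conv_int hc hM (ind_int j) t x) (conv_int hc hM hθ t x)]
    congr 1; ext y; ring
  rw [h3]
  rw [sub_zero] at h1
  have := abs_sub (phiConv n φ ((Qk n j).indicator (1 : En n → ℝ)) t x) (phiConv n φ θ t x)
  linarith

lemma conv_sum {n : ℕ} {φ θ : En n → ℝ} (h : IsTestFun n φ) (hθ : Integrable θ)
    {lam : (Fin n → ℤ) → ℝ} (hlam : Summable (fun j => |lam j|)) {g : En n → ℝ}
    (hg : ∀ x, g x = ∑' j : Fin n → ℤ,
      lam j * ((Qk n j).indicator (1 : En n → ℝ) x - θ x)) (t : ℝ) (x : En n) :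
    HasSum (fun j => lam j * phiConv n φ (aj n θ j) t x) (phiConv n φ g t x) := by
  obtain ⟨hc, hi, ⟨M, hM0, hM⟩, -, hz⟩ := phi_facts h
  have hI : 0 ≤ ∫ y, |θ y| := integral_nonneg fun y => abs_nonneg _
  have key := hasSum_integral_of_summable_integral_norm (μ := (volume : Measure (En n)))
    (F := fun j y => lam j * ((t ^ n)⁻¹ * φ (t⁻¹ • (x - y)) * aj n θ j y))
    (fun j => (conv_int hc hM (aj_int hθ j) t x).const_mul _) (by
      apply Summable.of_nonneg_of_le (fun j => integral_nonneg fun y => norm_nonneg _) (fun j => ?_)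
        (hlam.mul_right (|(t ^ n)⁻¹| * M * (1 + ∫ y, |θ y|)))
      calc _ ≤ ∫ y, |lam j| * (|(t ^ n)⁻¹| * M) * |aj n θ j y| := by
            apply integral_mono ((conv_int hc hM (aj_int hθ j) t x).const_mul _).norm
              ((aj_int hθ j).abs.const_mul _)
            intro y
            simp only [norm_mul, Real.norm_eq_abs]
            calc |lam j| * (|(t ^ n)⁻¹| * |φ (t⁻¹ • (x - y))| * |aj n θ j y|)
                ≤ |lam j| * (|(t ^ n)⁻¹| * M * |aj n θ j y|) := by
                  gcongr; exact hM _
              _ = _ := by ring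
        _ = |lam j| * (|(t ^ n)⁻¹| * M) * ∫ y, |aj n θ j y| := integral_const_mul _ _
        _ ≤ |lam j| * (|(t ^ n)⁻¹| * M) * (1 + ∫ y, |θ y|) := by
            gcongr; exact aj_absint hθ j
        _ = _ := by ring)
  have e1 : ∀ j, lam j * phiConv n φ (aj n θ j) t x =
      ∫ y, lam j * ((t ^ n)⁻¹ * φ (t⁻¹ • (x - y)) * aj n θ j y) := fun j => by
    rw [integral_const_mul]; rfl
  have e2 : phiConv n φ g t x =
      ∫ y, ∑' j, lam j * ((t ^ n)⁻¹ * φ (t⁻¹ • (x - y)) * aj n θ j y) := by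
    unfold phiConv
    congr 1; ext y
    rw [hg, ← tsum_mul_left]
    congr 1; ext j; unfold aj; ring
  simp_rw [e1]
  rw [e2]
  exact key

lemma om_meas {n : ℕ} {ω : En n → ℝ} {w : ℝ → ℝ} (hrad : ∀ x, ω x = w ‖x‖)
    (hmono : AntitoneOn w (Set.Ici 0)) : Measurable ω := by
  have h1 : Antitone (fun r : ℝ => w (max r 0)) := by
    intro a b hab
    exact hmono (by simp) (by simp) (max_le_max_right _ hab)
  have : ω = fun x => (fun r : ℝ => w (max r 0)) ‖x‖ := by
    ext x; simp [hrad]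
  rw [this]
  exact h1.measurable.comp measurable_norm

lemma om_le {n : ℕ} {ω : En n → ℝ} {w : ℝ → ℝ} (hrad : ∀ x, ω x = w ‖x‖)
    (hmono : AntitoneOn w (Set.Ici 0)) {x y : En n} (h : ‖x‖ ≤ ‖y‖) : ω y ≤ ω x := by
  rw [hrad, hrad]
  exact hmono (by simp) (by simp) h

/-- annulus -/
def ann (n : ℕ) (R : ℝ) : Set (En n) := {y : En n | 1 < ‖y‖ ∧ ‖y‖ < R}

lemma ann_meas (n : ℕ) (R : ℝ) : MeasurableSet (ann n R) :=
  (measurableSet_lt measurable_const measurable_norm).inter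
    (measurableSet_lt measurable_norm measurable_const)

lemma ann_eq {n : ℕ} {ω : En n → ℝ} (hω0 : ∀ x, 0 ≤ ω x) (hm : Measurable ω) {W : ℝ}
    (hW : ∀ x, ω x ≤ W) (R : ℝ) :
    ∫⁻ y in ann n R, ENNReal.ofReal (ω y / ‖y‖ ^ n) =
      ENNReal.ofReal (∫ y in ann n R, ω y / ‖y‖ ^ n) := by
  have hi : IntegrableOn (fun y => ω y / ‖y‖ ^ n) (ann n R) := by
    have hms : Measurable (fun y => ω y / ‖y‖ ^ n) := by fun_prop
    have hfin : volume (ann n R) < ⊤ := by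
      refine (measure_mono (t := closedBall (0 : En n) R) ?_).trans_lt measure_closedBall_lt_top
      intro y hy; simpa using hy.2.le
    apply IntegrableOn.of_bound hfin hms.aestronglyMeasurable W
    rw [ae_restrict_iff' (ann_meas n R)]
    refine Filter.Eventually.of_forall fun y hy => ?_
    have h1 : 1 ≤ ‖y‖ ^ n := one_le_pow₀ hy.1.le
    rw [Real.norm_of_nonneg (div_nonneg (hω0 _) (by positivity))]
    exact (div_le_self (hω0 _) h1).trans (hW y)
  rw [ofReal_integral_eq_lintegral_ofReal hi]
  exact Filter.Eventually.of_forall fun y => div_nonneg (hω0 _) (by positivity)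

lemma Om_ge {n : ℕ} {ω : En n → ℝ} (hω0 : ∀ x, 0 ≤ ω x) (hm : Measurable ω) {W : ℝ}
    (hW : ∀ x, ω x ≤ W) (R : ℝ) :
    ∫⁻ y in ann n R, ENNReal.ofReal (ω y / ‖y‖ ^ n) ≤ ENNReal.ofReal (OmegaFun n ω R) := by
  rw [ann_eq hω0 hm hW]
  apply ENNReal.ofReal_le_ofReal
  unfold OmegaFun
  have : 0 ≤ ∫ y in unitQ n, ω y := integral_nonneg fun _ => hω0 _
  unfold ann
  linarith

lemma Om_le {n : ℕ} {ω : En n → ℝ} (hω0 : ∀ x, 0 ≤ ω x) (hm : Measurable ω) {W : ℝ}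
    (hW : ∀ x, ω x ≤ W) (R : ℝ) : ENNReal.ofReal (OmegaFun n ω R) ≤
    ENNReal.ofReal (∫ y in unitQ n, ω y) + ∫⁻ y in ann n R, ENNReal.ofReal (ω y / ‖y‖ ^ n) := by
  rw [ann_eq hω0 hm hW]
  exact ENNReal.ofReal_add_le

lemma Om_nonneg {n : ℕ} {ω : En n → ℝ} (hω0 : ∀ x, 0 ≤ ω x) (R : ℝ) : 0 ≤ OmegaFun n ω R :=
  add_nonneg (integral_nonneg fun _ => hω0 _)
    (integral_nonneg fun _ => div_nonneg (hω0 _) (by positivity))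

/-- volume of the unit ball -/
def VB (n : ℕ) : ℝ≥0∞ := volume (ball (0 : En n) 1)

lemma VB_top (n : ℕ) : VB n < ⊤ := measure_ball_lt_top

lemma vol_cb (n : ℕ) (r : ℝ) (hr : 0 ≤ r) :
    volume (closedBall (0 : En n) r) = ENNReal.ofReal (r ^ n) * VB n := by
  rw [Measure.addHaar_closedBall _ _ hr, finrank_euclideanSpace_fin]; rfl

lemma J_bound {n : ℕ} {ω : En n → ℝ} (hω0 : ∀ x, 0 ≤ ω x) (hm : Measurable ω) {W : ℝ}
    (hW : ∀ x, ω x ≤ W) {ρ R B : ℝ} (hR0 : 0 ≤ R) (hR : R ≤ B * max 1 ρ) :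
    ∫⁻ x, ENNReal.ofReal ((ball (0 : En n) R).indicator (fun x => ω x / (1 + ‖x‖) ^ n) x) ≤
      ENNReal.ofReal (OmegaFun n ω ρ) +
        (ENNReal.ofReal W * VB n + ENNReal.ofReal (W * B ^ n) * VB n) := by
  have hW0 : 0 ≤ W := (hω0 0).trans (hW 0)
  have hm1 : 0 < max 1 ρ := by positivity
  have hB : 0 ≤ B := by
    by_contra h; push Not at h; nlinarith
  have pt : ∀ x : En n, ENNReal.ofReal ((ball (0 : En n) R).indicator (fun x => ω x / (1 + ‖x‖) ^ n) x) ≤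
      (ann n ρ).indicator (fun y => ENNReal.ofReal (ω y / ‖y‖ ^ n)) x +
      ((closedBall (0 : En n) 1).indicator (fun _ => ENNReal.ofReal W) x +
        (closedBall (0 : En n) R).indicator (fun _ => ENNReal.ofReal (W / (max 1 ρ) ^ n)) x) := by
    intro x
    by_cases hx : x ∈ ball (0 : En n) R
    swap
    · simp [hx]
    have hx' : x ∈ closedBall (0 : En n) R := ball_subset_closedBall hx
    rw [indicator_of_mem hx, indicator_of_mem hx']
    by_cases h1 : ‖x‖ ≤ 1
    · rw [indicator_of_mem (s := closedBall (0 : En n) 1) (by simpa using h1)]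
      refine le_trans ?_ (le_trans le_self_add le_add_self)
      apply ENNReal.ofReal_le_ofReal
      exact (div_le_self (hω0 _) (one_le_pow₀ (by simp))).trans (hW _)
    push Not at h1
    by_cases h2 : ‖x‖ < ρ
    · rw [indicator_of_mem (s := ann n ρ) ⟨h1, h2⟩]
      refine le_trans ?_ le_self_add
      apply ENNReal.ofReal_le_ofReal
      apply div_le_div_of_nonneg_left (hω0 _) (by positivity)
      gcongr; linarith
    · push Not at h2
      refine le_trans ?_ (le_trans le_add_self le_add_self)
      apply ENNReal.ofReal_le_ofReal
      apply div_le_div₀ hW0 (hW _) (by positivity)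
      gcongr
      apply max_le <;> linarith
  refine (lintegral_mono pt).trans ?_
  have m1 : Measurable fun y => ENNReal.ofReal (ω y / ‖y‖ ^ n) := by fun_prop
  rw [lintegral_add_left (m1.indicator (ann_meas n ρ)),
    lintegral_add_left (measurable_const.indicator measurableSet_closedBall),
    lintegral_indicator (ann_meas n ρ), lintegral_indicator_const measurableSet_closedBall,
    lintegral_indicator_const measurableSet_closedBall, vol_cb _ _ zero_le_one, vol_cb _ _ hR0]
  refine add_le_add ?_ (add_le_add ?_ ?_)
  · exact Om_ge hω0 hm hW ρ
  · simp
  · rw [← mul_assoc, ← ENNReal.ofReal_mul (by positivity)]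
    refine mul_le_mul' (ENNReal.ofReal_le_ofReal ?_) le_rfl
    rw [div_mul_eq_mul_div, div_le_iff₀ (by positivity), mul_assoc, ← mul_pow]
    gcongr

lemma tail_bound (n : ℕ) : ∃ C : ℝ≥0∞, C < ⊤ ∧ ∀ R : ℝ, 0 < R →
    ∫⁻ x : En n, ENNReal.ofReal (R / (R + ‖x‖) ^ (n + 1)) ≤ C := by
  have hi : Integrable (fun x : En n => (1 + ‖x‖) ^ (-((n + 1 : ℕ) : ℝ))) :=
    integrable_one_add_norm (by rw [finrank_euclideanSpace_fin]; push_cast; linarith)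
  have hi' : Integrable (fun x : En n => ((1 + ‖x‖) ^ (n + 1))⁻¹) := by
    refine hi.congr (Filter.Eventually.of_forall fun x => ?_)
    simp only
    rw [Real.rpow_neg (by positivity), Real.rpow_natCast]
  refine ⟨ENNReal.ofReal (∫ x : En n, ((1 + ‖x‖) ^ (n + 1))⁻¹), ENNReal.ofReal_lt_top, fun R hR => ?_⟩
  have e : ∀ x : En n, R / (R + ‖x‖) ^ (n + 1) = (R ^ n)⁻¹ * ((1 + ‖R⁻¹ • x‖) ^ (n + 1))⁻¹ := by
    intro x
    rw [norm_smul, norm_inv, Real.norm_eq_abs, abs_of_pos hR]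
    have : 1 + R⁻¹ * ‖x‖ = (R + ‖x‖) / R := by field_simp
    rw [this, div_pow, inv_div, pow_succ R]
    have : 0 < R + ‖x‖ := by positivity
    field_simp
  simp_rw [e]
  have h2 : Integrable (fun x : En n => (R ^ n)⁻¹ * ((1 + ‖R⁻¹ • x‖) ^ (n + 1))⁻¹) :=
    ((integrable_comp_smul_iff volume (fun x : En n => ((1 + ‖x‖) ^ (n + 1))⁻¹)
      (by positivity : R⁻¹ ≠ 0)).2 hi').const_mul _
  rw [← ofReal_integral_eq_lintegral_ofReal h2 (Filter.Eventually.of_forall fun x => by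
    simp only [Pi.zero_apply]; positivity)]
  apply ENNReal.ofReal_le_ofReal
  rw [integral_const_mul, Measure.integral_comp_smul volume (fun x : En n => ((1 + ‖x‖) ^ (n + 1))⁻¹)]
  rw [finrank_euclideanSpace_fin, inv_pow, inv_inv, abs_of_pos (by positivity), smul_eq_mul,
    inv_mul_cancel_left₀ (by positivity)]

/-- majorant -/
def DD (n : ℕ) (ω : En n → ℝ) (j : Fin n → ℤ) (x : En n) : ℝ :=
  (ball (0 : En n) (2 * ‖zv n j‖ + 4 * √n)).indicator (fun x => ω x / (1 + ‖x‖) ^ n) x +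
  (ball (0 : En n) (2 * (2 * ‖zv n j‖ + 4 * √n))).indicator (fun x => ω x / (1 + ‖x‖) ^ n)
    (x - zv n j) +
  (2 * ‖zv n j‖ + 4 * √n) / ((2 * ‖zv n j‖ + 4 * √n) + ‖x‖) ^ (n + 1)

lemma ind_F {n : ℕ} {ω : En n → ℝ} (hω0 : ∀ x, 0 ≤ ω x) {W : ℝ}
    (hW : ∀ x, ω x ≤ W) (s : Set (En n)) (x : En n) :
    0 ≤ s.indicator (fun x => ω x / (1 + ‖x‖) ^ n) x ∧
      s.indicator (fun x => ω x / (1 + ‖x‖) ^ n) x ≤ W := by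
  have hW0 : 0 ≤ W := (hω0 0).trans (hW 0)
  by_cases h : x ∈ s
  · rw [indicator_of_mem h]
    exact ⟨div_nonneg (hω0 _) (by positivity),
      (div_le_self (hω0 _) (one_le_pow₀ (by simp))).trans (hW _)⟩
  · rw [indicator_of_notMem h]; exact ⟨le_rfl, hW0⟩

lemma DD_bd {n : ℕ} (hn : 1 ≤ n) {ω : En n → ℝ} (hω0 : ∀ x, 0 ≤ ω x) {W : ℝ}
    (hW : ∀ x, ω x ≤ W) (j : Fin n → ℤ) (x : En n) :
    0 ≤ DD n ω j x ∧ DD n ω j x ≤ 2 * W + 1 := by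
  have hs : 1 ≤ √(n:ℝ) := Real.one_le_sqrt.2 (by exact_mod_cast hn)
  unfold DD
  have h1 := ind_F hω0 hW (ball (0 : En n) (2 * ‖zv n j‖ + 4 * √n)) x
  have h2 := ind_F hω0 hW (ball (0 : En n) (2 * (2 * ‖zv n j‖ + 4 * √n))) (x - zv n j)
  have hR : 1 ≤ 2 * ‖zv n j‖ + 4 * √n := by
    have := norm_nonneg (zv n j); linarith
  set R := 2 * ‖zv n j‖ + 4 * √n
  have h3 : 0 ≤ R / (R + ‖x‖) ^ (n + 1) := by positivity
  have h4 : R / (R + ‖x‖) ^ (n + 1) ≤ 1 := by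
    rw [div_le_one (by positivity), pow_succ]
    have h5 : 1 ≤ (R + ‖x‖) ^ n := one_le_pow₀ (by have := norm_nonneg x; linarith)
    have := norm_nonneg x
    nlinarith
  constructor <;> linarith [h1.1, h1.2, h2.1, h2.2]

lemma DD_meas {n : ℕ} {ω : En n → ℝ} (hm : Measurable ω) (j : Fin n → ℤ) :
    Measurable (DD n ω j) := by
  have h : Measurable (fun x : En n => ω x / (1 + ‖x‖) ^ n) := by fun_prop
  unfold DD
  refine ((h.indicator measurableSet_ball).add
    ((h.indicator measurableSet_ball).comp (measurable_id.sub_const _))).add ?_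
  fun_prop

lemma DD_int {n : ℕ} (hn : 1 ≤ n) {ω : En n → ℝ} (hω0 : ∀ x, 0 ≤ ω x) (hm : Measurable ω) {W : ℝ}
    (hW : ∀ x, ω x ≤ W) : ∃ C : ℝ≥0∞, C < ⊤ ∧ ∀ j,
    ∫⁻ x, ENNReal.ofReal (DD n ω j x) ≤ 2 * ENNReal.ofReal (OmegaFun n ω ‖zv n j‖) + C := by
  obtain ⟨T, hT, hT'⟩ := tail_bound n
  have hs : 1 ≤ √(n:ℝ) := Real.one_le_sqrt.2 (by exact_mod_cast hn)
  set B := 2 * (2 + 4 * √(n:ℝ)) with hB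
  set C0 := ENNReal.ofReal W * VB n + ENNReal.ofReal (W * B ^ n) * VB n with hC0
  have hV := VB_top n
  refine ⟨2 * C0 + T, ?_, fun j => ?_⟩
  · apply ENNReal.add_lt_top.2 ⟨ENNReal.mul_lt_top (by simp) ?_, hT⟩
    exact ENNReal.add_lt_top.2 ⟨ENNReal.mul_lt_top (by simp) hV, ENNReal.mul_lt_top (by simp) hV⟩
  set p := zv n j
  have hp := norm_nonneg p
  have hmax1 := le_max_left 1 ‖p‖
  have hmax2 := le_max_right 1 ‖p‖
  have hR : 1 ≤ 2 * ‖p‖ + 4 * √n := by linarith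
  have hR2 : 2 * (2 * ‖p‖ + 4 * √n) ≤ B * max 1 ‖p‖ := by rw [hB]; nlinarith
  have j1 := J_bound hω0 hm hW (ρ := ‖p‖) (R := 2 * ‖p‖ + 4 * √n) (B := B) (by linarith) (by linarith)
  have j2 := J_bound hω0 hm hW (ρ := ‖p‖) (R := 2 * (2 * ‖p‖ + 4 * √n)) (B := B) (by linarith) (by linarith)
  have j3 := hT' (2 * ‖p‖ + 4 * √n) (by linarith)
  have h : Measurable (fun x : En n => ω x / (1 + ‖x‖) ^ n) := by fun_prop
  calc ∫⁻ x, ENNReal.ofReal (DD n ω j x) ≤ ∫⁻ x,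
        ((ENNReal.ofReal ((ball (0 : En n) (2 * ‖p‖ + 4 * √n)).indicator (fun x => ω x / (1 + ‖x‖) ^ n) x) +
        (fun z => ENNReal.ofReal ((ball (0 : En n) (2 * (2 * ‖p‖ + 4 * √n))).indicator (fun x => ω x / (1 + ‖x‖) ^ n) z)) (x - p)) +
        ENNReal.ofReal ((2 * ‖p‖ + 4 * √n) / ((2 * ‖p‖ + 4 * √n) + ‖x‖) ^ (n + 1))) := by
        apply lintegral_mono
        intro x
        exact ENNReal.ofReal_add_le.trans (add_le_add_left ENNReal.ofReal_add_le _)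
    _ ≤ (ENNReal.ofReal (OmegaFun n ω ‖p‖) + C0) + (ENNReal.ofReal (OmegaFun n ω ‖p‖) + C0) + T := by
        have m1 : Measurable fun x => ENNReal.ofReal ((ball (0 : En n) (2 * ‖p‖ + 4 * √n)).indicator (fun x => ω x / (1 + ‖x‖) ^ n) x) :=
          (h.indicator measurableSet_ball).ennreal_ofReal
        have m3 : Measurable fun x : En n => ENNReal.ofReal ((2 * ‖p‖ + 4 * √n) / ((2 * ‖p‖ + 4 * √n) + ‖x‖) ^ (n + 1)) := by
          fun_prop
        rw [lintegral_add_right _ m3, lintegral_add_left m1,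
          lintegral_sub_right_eq_self (fun z => ENNReal.ofReal ((ball (0 : En n) (2 * (2 * ‖p‖ + 4 * √n))).indicator (fun x => ω x / (1 + ‖x‖) ^ n) z)) p]
        exact add_le_add (add_le_add j1 j2) j3
    _ = _ := by ring

lemma key_i {n : ℕ} (hn : 1 ≤ n) {φ θ : En n → ℝ} (h : IsTestFun n φ) (hθ : Integrable θ)
    {C : ℝ} (hC : ∀ x, |θ x| ≤ C) (hθsupp : ∀ x, x ∉ unitQ n → θ x = 0) (hθint : (∫ x, θ x) = 1)
    {ω : En n → ℝ} (hω0 : ∀ x, 0 ≤ ω x) {w : ℝ → ℝ} (hrad : ∀ x, ω x = w ‖x‖)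
    (hmono : AntitoneOn w (Set.Ici 0)) :
    ∃ K, 0 ≤ K ∧ ∀ j t, 0 < t → ∀ x, |phiConv n φ (aj n θ j) t x| * ω x ≤ K * DD n ω j x := by
  obtain ⟨K1, hK10, hK1⟩ := aj_conv hn h hθ hC hθsupp
  obtain ⟨hc, hi, ⟨M, hM0, hM⟩, ⟨L, hL0, hL⟩, hz⟩ := phi_facts h
  have hW : ∀ x, ω x ≤ ω 0 := fun x => om_le hrad hmono (by simp)
  have hs : 1 ≤ √(n:ℝ) := Real.one_le_sqrt.2 (by exact_mod_cast hn)
  have hI : 0 ≤ ∫ y, |θ y| := integral_nonneg fun y => abs_nonneg _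
  set A := 1 + ∫ y, |θ y|
  have hA : 0 ≤ A := by positivity
  have hW0 := hω0 0
  have hK2 : 0 ≤ L * A * 4 ^ (n + 1) * ω 0 := by positivity
  refine ⟨2 * K1 + L * A * 4 ^ (n + 1) * ω 0, by positivity, fun j t ht x => ?_⟩
  have h1 := ind_F hω0 hW (ball (0 : En n) (2 * ‖zv n j‖ + 4 * √n)) x
  have h2 := ind_F hω0 hW (ball (0 : En n) (2 * (2 * ‖zv n j‖ + 4 * √n))) (x - zv n j)
  unfold DD
  set p := zv n j
  have hp := norm_nonneg p
  have hxn := norm_nonneg x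
  have hR : 1 ≤ 2 * ‖p‖ + 4 * √n := by linarith
  have h3 : 0 ≤ (2 * ‖p‖ + 4 * √n) / ((2 * ‖p‖ + 4 * √n) + ‖x‖) ^ (n + 1) := by positivity
  by_cases hx : ‖x‖ < 2 * ‖p‖ + 4 * √n
  · have e1 : x ∈ ball (0 : En n) (2 * ‖p‖ + 4 * √n) := by simpa using hx
    have e2 : x - p ∈ ball (0 : En n) (2 * (2 * ‖p‖ + 4 * √n)) := by
      rw [mem_ball_zero_iff]
      have := norm_sub_le x p
      linarith
    rw [indicator_of_mem e1] at h1 ⊢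
    rw [indicator_of_mem e2] at h2 ⊢
    have hk := hK1 j t ht x
    have hcmp : ω x / (1 + ‖x - p‖) ^ n ≤ ω x / (1 + ‖x‖) ^ n + ω (x - p) / (1 + ‖x - p‖) ^ n := by
      by_cases hle : ‖x‖ ≤ ‖x - p‖
      · have : ω x / (1 + ‖x - p‖) ^ n ≤ ω x / (1 + ‖x‖) ^ n := by
          apply div_le_div_of_nonneg_left (hω0 _) (by positivity)
          gcongr
        linarith [h2.1]
      · have : ω x / (1 + ‖x - p‖) ^ n ≤ ω (x - p) / (1 + ‖x - p‖) ^ n := by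
          gcongr
          exact om_le hrad hmono (not_le.1 hle).le
        linarith [h1.1]
    set F := ω x / (1 + ‖x‖) ^ n
    set G := ω (x - p) / (1 + ‖x - p‖) ^ n
    set H := (2 * ‖p‖ + 4 * √n) / ((2 * ‖p‖ + 4 * √n) + ‖x‖) ^ (n + 1)
    calc _ ≤ (K1 / (1 + ‖x‖) ^ n + K1 / (1 + ‖x - p‖) ^ n) * ω x := by
          gcongr; exact hω0 x
      _ = K1 * (F + ω x / (1 + ‖x - p‖) ^ n) := by simp only [F]; ring
      _ ≤ K1 * (F + (F + G)) := by gcongr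
      _ ≤ K1 * (2 * (F + G + H)) := by gcongr; linarith [h2.1]
      _ = (2 * K1) * (F + G + H) := by ring
      _ ≤ _ := by
          apply mul_le_mul_of_nonneg_right (by linarith)
          linarith [h1.1, h2.1]
  · push Not at hx
    have hsup : ∀ y, ‖p‖ + 2 * √n < ‖y‖ → aj n θ j y = 0 := by
      intro y hy
      unfold aj
      rw [th_supp hθsupp y (by linarith), ind_supp j y, sub_zero]
      have : ‖y‖ ≤ ‖y - p‖ + ‖p‖ := norm_le_norm_sub_add ..
      change _ < ‖y - p‖
      linarith
    have hcn := conv_cancel hc hM hL0 hL hz (aj_int hθ j) (aj_int0 hθ hθint j)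
      (ρ := ‖p‖ + 2 * √n) (by linarith) hsup ht (x := x) (by linarith)
    have hx0 : 0 < ‖x‖ := by linarith
    set R := 2 * ‖p‖ + 4 * √n with hRd
    have hfr : (2 / ‖x‖) ^ (n + 1) ≤ 4 ^ (n + 1) / (R + ‖x‖) ^ (n + 1) := by
      rw [← div_pow]
      gcongr ?_ ^ _
      rw [div_le_div_iff₀ hx0 (by linarith)]
      linarith
    calc _ ≤ (L * R * A * (4 ^ (n + 1) / (R + ‖x‖) ^ (n + 1))) * ω 0 := by
          apply mul_le_mul _ (hW x) (hω0 x) (by positivity)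
          refine hcn.trans ?_
          have := aj_absint hθ j
          have : 0 ≤ ∫ y, |aj n θ j y| := integral_nonneg fun y => abs_nonneg _
          gcongr
          linarith
      _ = (L * A * 4 ^ (n + 1) * ω 0) * (R / (R + ‖x‖) ^ (n + 1)) := by ring
      _ ≤ _ := by
          apply mul_le_mul (by linarith) (by linarith [h1.1, h2.1]) h3 (by positivity)

lemma part_i {n : ℕ} (hn : 1 ≤ n) {φ θ : En n → ℝ} (h : IsTestFun n φ) (hθ : Integrable θ)
    {C : ℝ} (hC : ∀ x, |θ x| ≤ C) (hθsupp : ∀ x, x ∉ unitQ n → θ x = 0) (hθint : (∫ x, θ x) = 1)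
    {ω : En n → ℝ} (hω0 : ∀ x, 0 ≤ ω x) {w : ℝ → ℝ} (hrad : ∀ x, ω x = w ‖x‖)
    (hmono : AntitoneOn w (Set.Ici 0))
    {lam : (Fin n → ℤ) → ℝ} (hlam : Summable (fun j => |lam j|)) {g : En n → ℝ}
    (hg : ∀ x, g x = ∑' j : Fin n → ℤ,
      lam j * ((Qk n j).indicator (1 : En n → ℝ) x - θ x))
    (hS : Summable (fun j => |lam j| * OmegaFun n ω ‖zv n j‖)) :
    ∫⁻ x, ENNReal.ofReal (Mphi n φ g x * ω x) < ⊤ := by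
  obtain ⟨K, hK0, hK⟩ := key_i hn h hθ hC hθsupp hθint hω0 hrad hmono
  have hW : ∀ x, ω x ≤ ω 0 := fun x => om_le hrad hmono (by simp)
  have hm := om_meas hrad hmono
  obtain ⟨T, hT, hD⟩ := DD_int hn hω0 hm hW
  have hsum : ∀ x, Summable fun j => |lam j| * (K * DD n ω j x) := by
    intro x
    refine Summable.of_nonneg_of_le (fun j => ?_) (fun j => ?_)
      (hlam.mul_right (K * (2 * ω 0 + 1)))
    · have := (DD_bd hn hω0 hW j x).1; positivity
    · have := (DD_bd hn hω0 hW j x).2; gcongr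
  have pt : ∀ x, ENNReal.ofReal (Mphi n φ g x * ω x) ≤
      ∑' j, ENNReal.ofReal (|lam j|) * (ENNReal.ofReal K * ENNReal.ofReal (DD n ω j x)) := by
    intro x
    have h1 : Mphi n φ g x * ω x ≤ ∑' j, |lam j| * (K * DD n ω j x) := by
      unfold Mphi
      rw [Real.iSup_mul_of_nonneg (hω0 x)]
      have : Nonempty {t : ℝ // 0 < t} := ⟨⟨1, one_pos⟩⟩
      apply ciSup_le
      rintro ⟨t, ht⟩
      have hs := (conv_sum h hθ hlam hg t x).mul_right (ω x)
      have hb : ∀ j, ‖lam j * phiConv n φ (aj n θ j) t x * ω x‖ ≤ |lam j| * (K * DD n ω j x) := by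
        intro j
        rw [norm_mul, norm_mul, Real.norm_eq_abs, Real.norm_eq_abs, Real.norm_of_nonneg (hω0 x),
          mul_assoc]
        exact mul_le_mul_of_nonneg_left (hK j t ht x) (abs_nonneg _)
      have := tsum_of_norm_bounded (hsum x).hasSum hb
      rw [hs.tsum_eq, norm_mul, Real.norm_of_nonneg (hω0 x)] at this
      exact this
    refine (ENNReal.ofReal_le_ofReal h1).trans ?_
    rw [ENNReal.ofReal_tsum_of_nonneg (fun j => by
      have := (DD_bd hn hω0 hW j x).1; positivity) (hsum x)]
    apply le_of_eq
    congr 1; ext j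
    rw [ENNReal.ofReal_mul (abs_nonneg _), ENNReal.ofReal_mul hK0]
  refine (lintegral_mono pt).trans_lt ?_
  rw [lintegral_tsum (fun j => by
    have := DD_meas hm j
    exact (by fun_prop : Measurable _).aemeasurable)]
  have e : ∀ j, ∫⁻ x, ENNReal.ofReal (|lam j|) * (ENNReal.ofReal K * ENNReal.ofReal (DD n ω j x)) ≤
      ENNReal.ofReal K * 2 * ENNReal.ofReal (|lam j| * OmegaFun n ω ‖zv n j‖) +
      ENNReal.ofReal K * T * ENNReal.ofReal (|lam j|) := by
    intro j
    have := DD_meas hm j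
    rw [lintegral_const_mul _ (by fun_prop), lintegral_const_mul _ (by fun_prop)]
    calc _ ≤ ENNReal.ofReal (|lam j|) * (ENNReal.ofReal K * (2 * ENNReal.ofReal (OmegaFun n ω ‖zv n j‖) + T)) := by
          gcongr; exact hD j
      _ = _ := by rw [ENNReal.ofReal_mul (abs_nonneg _)]; ring
  refine (ENNReal.tsum_le_tsum e).trans_lt ?_
  rw [ENNReal.tsum_add, ENNReal.tsum_mul_left, ENNReal.tsum_mul_left,
    ← ENNReal.ofReal_tsum_of_nonneg (fun j => abs_nonneg _) hlam,
    ← ENNReal.ofReal_tsum_of_nonneg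
      (fun j => mul_nonneg (abs_nonneg _) (Om_nonneg hω0 _)) hS]
  apply ENNReal.add_lt_top.2
  constructor
  · exact ENNReal.mul_lt_top (ENNReal.mul_lt_top (by simp) (by simp)) (by simp)
  · exact ENNReal.mul_lt_top (ENNReal.mul_lt_top (by simp) hT) (by simp)

lemma exists_test (n : ℕ) : ∃ (φ : En n → ℝ) (c : ℝ), IsTestFun n φ ∧ 0 < c ∧ (∀ x, φ x ≤ c) ∧
    ∀ x, ‖x‖ ≤ 1 / 2 → φ x = c := by
  let f : ContDiffBump (0 : En n) := ⟨1 / 2, 1, by norm_num, by norm_num⟩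
  have hpos : 0 < ∫ x, f x := f.integral_pos
  refine ⟨f.normed volume, 1 / ∫ x, f x, ⟨f.contDiff_normed, ?_, f.integral_normed⟩, by positivity,
    ?_, ?_⟩
  · intro x hx
    rw [f.normed_def, f.zero_of_le_dist, zero_div]
    change (1:ℝ) ≤ _
    rw [mem_closedBall] at hx
    linarith
  · intro x
    rw [f.normed_def]
    gcongr
    exact f.le_one
  · intro x hx
    rw [f.normed_def, f.one_of_mem_closedBall]
    rw [mem_closedBall_zero_iff]
    exact hx

lemma low {n : ℕ} {φ θ : En n → ℝ} {c : ℝ} (h : IsTestFun n φ) (hc : ∀ x, φ x ≤ c)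
    (hc2 : ∀ x, ‖x‖ ≤ 1 / 2 → φ x = c) (hθ : Integrable θ)
    (hθsupp : ∀ x, x ∉ unitQ n → θ x = 0) (hθint : (∫ x, θ x) = 1)
    {x : En n} {t : ℝ} (ht0 : 0 < t) (ht : 2 * (‖x‖ + √n) ≤ t) (j : Fin n → ℤ) :
    phiConv n φ (aj n θ j) t x ≤ 0 ∧
      (‖x‖ + 2 * √n + t ≤ ‖zv n j‖ → 0 < √(n:ℝ) → phiConv n φ (aj n θ j) t x = -(c / t ^ n)) := by
  obtain ⟨hcont, hi, ⟨M, hM0, hM⟩, -, hz⟩ := phi_facts h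
  have e : phiConv n φ (aj n θ j) t x =
      ∫ y, (t ^ n)⁻¹ * (φ (t⁻¹ • (x - y)) - c) * (Qk n j).indicator (1 : En n → ℝ) y := by
    rw [conv_sub_const hcont hM (aj_int hθ j) (aj_int0 hθ hθint j) t x c]
    congr 1; ext y
    unfold aj
    by_cases hy : √n < ‖y‖
    · rw [th_supp hθsupp y hy, sub_zero]
    · push Not at hy
      have : φ (t⁻¹ • (x - y)) = c := by
        apply hc2
        rw [norm_smul, norm_inv, Real.norm_eq_abs, abs_of_pos ht0, ← div_eq_inv_mul,
          div_le_iff₀ ht0]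
        have := norm_sub_le x y
        linarith
      rw [this]; simp
  constructor
  · rw [e]
    apply integral_nonpos
    intro y
    have h1 : 0 ≤ (Qk n j).indicator (1 : En n → ℝ) y := indicator_nonneg (fun _ _ => zero_le_one) y
    have h2 := hc (t⁻¹ • (x - y))
    have h3 : 0 < (t ^ n)⁻¹ := by positivity
    exact mul_nonpos_of_nonpos_of_nonneg (mul_nonpos_of_nonneg_of_nonpos h3.le (by linarith)) h1
  · intro hj hs
    rw [e]
    have : ∀ y, (t ^ n)⁻¹ * (φ (t⁻¹ • (x - y)) - c) * (Qk n j).indicator (1 : En n → ℝ) y =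
        (-(c / t ^ n)) * (Qk n j).indicator (1 : En n → ℝ) y := by
      intro y
      by_cases hy : y ∈ Qk n j
      · have h1 := Qk_norm hy
        have h2 : ‖zv n j‖ ≤ ‖zv n j - y‖ + ‖y‖ := norm_le_norm_sub_add ..
        have h3 : ‖y‖ ≤ ‖y - x‖ + ‖x‖ := norm_le_norm_sub_add ..
        rw [norm_sub_rev] at h2 h3
        rw [phi_zero hz ht0 (by linarith)]
        ring
      · simp [hy]
    simp_rw [this]
    rw [integral_const_mul, ind_int1, mul_one]

/-- inner annulus -/
def ann2 (n : ℕ) (K R : ℝ) : Set (En n) := {y : En n | 1 < ‖y‖ ∧ K * ‖y‖ ≤ R}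

lemma ann2_meas (n : ℕ) (K R : ℝ) : MeasurableSet (ann2 n K R) :=
  (measurableSet_lt measurable_const measurable_norm).inter
    (measurableSet_le (measurable_norm.const_mul K) measurable_const)

lemma ann_split {n : ℕ} {ω : En n → ℝ} (hω0 : ∀ x, 0 ≤ ω x) (hm : Measurable ω) {W : ℝ}
    (hW : ∀ x, ω x ≤ W) {K R : ℝ} (hK : 0 < K) (hR : 0 ≤ R) :
    ∫⁻ y in ann n R, ENNReal.ofReal (ω y / ‖y‖ ^ n) ≤
      (∫⁻ y in ann2 n K R, ENNReal.ofReal (ω y / ‖y‖ ^ n)) + ENNReal.ofReal (W * K ^ n) * VB n := by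
  have hW0 : 0 ≤ W := (hω0 0).trans (hW 0)
  rcases hR.eq_or_lt with rfl | hR
  · have : ann n 0 = ∅ := by
      ext y
      simp only [ann, mem_setOf_eq, mem_empty_iff_false, iff_false]
      rintro ⟨h1, h2⟩; linarith
    rw [this]; simp
  have m1 : Measurable fun y => ENNReal.ofReal (ω y / ‖y‖ ^ n) := by fun_prop
  have pt : ∀ x, (ann n R).indicator (fun y => ENNReal.ofReal (ω y / ‖y‖ ^ n)) x ≤
      (ann2 n K R).indicator (fun y => ENNReal.ofReal (ω y / ‖y‖ ^ n)) x +
        (closedBall (0 : En n) R).indicator (fun _ => ENNReal.ofReal (W * K ^ n / R ^ n)) x := by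
    intro x
    by_cases hx : x ∈ ann n R
    swap
    · simp [hx]
    rw [indicator_of_mem hx]
    by_cases h2 : K * ‖x‖ ≤ R
    · rw [indicator_of_mem (s := ann2 n K R) ⟨hx.1, h2⟩]
      exact le_self_add
    · push Not at h2
      have hx0 : 0 < ‖x‖ := by linarith [hx.1]
      rw [indicator_of_mem (s := closedBall (0 : En n) R) (by simpa using hx.2.le)]
      refine le_trans ?_ le_add_self
      apply ENNReal.ofReal_le_ofReal
      rw [div_le_div_iff₀ (by positivity) (by positivity), mul_assoc, ← mul_pow]
      apply mul_le_mul (hW _) _ (by positivity) hW0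
      gcongr
  rw [← lintegral_indicator (ann_meas n R)]
  refine (lintegral_mono pt).trans ?_
  rw [lintegral_add_left (m1.indicator (ann2_meas n K R)), lintegral_indicator (ann2_meas n K R),
    lintegral_indicator_const measurableSet_closedBall, vol_cb _ _ hR.le, ← mul_assoc,
    ← ENNReal.ofReal_mul (by positivity), div_mul_cancel₀ _ (by positivity)]

lemma part_ii {n : ℕ} (hn : 1 ≤ n) {θ : En n → ℝ} (hθ : Integrable θ)
    {C : ℝ} (hC : ∀ x, |θ x| ≤ C) (hθsupp : ∀ x, x ∉ unitQ n → θ x = 0) (hθint : (∫ x, θ x) = 1)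
    {ω : En n → ℝ} (hω0 : ∀ x, 0 ≤ ω x) {w : ℝ → ℝ} (hrad : ∀ x, ω x = w ‖x‖)
    (hmono : AntitoneOn w (Set.Ici 0))
    {lam : (Fin n → ℤ) → ℝ} (hlam : Summable (fun j => |lam j|)) {g : En n → ℝ}
    (hg : ∀ x, g x = ∑' j : Fin n → ℤ,
      lam j * ((Qk n j).indicator (1 : En n → ℝ) x - θ x))
    (hpos : ∀ j, 0 ≤ lam j)
    (hfin : ∀ φ : En n → ℝ, IsTestFun n φ → ∫⁻ x, ENNReal.ofReal (Mphi n φ g x * ω x) < ⊤) :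
    Summable (fun j => lam j * OmegaFun n ω ‖zv n j‖) := by
  obtain ⟨φ, c, h, hc0, hc, hc2⟩ := exists_test n
  have hW : ∀ x, ω x ≤ ω 0 := fun x => om_le hrad hmono (by simp)
  have hm := om_meas hrad hmono
  have hs : 1 ≤ √(n:ℝ) := Real.one_le_sqrt.2 (by exact_mod_cast hn)
  have hlam' : Summable lam := by simpa [abs_of_nonneg (hpos _)] using hlam
  obtain ⟨K0, hK00, hK0⟩ := aj_conv hn h hθ hC hθsupp
  set K := 3 + 4 * √(n:ℝ) with hKd
  have hKpos : 0 < K := by linarith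
  set c1 := c / (2 + 2 * √(n:ℝ)) ^ n with hc1
  have hc1pos : 0 < c1 := by positivity
  have hbdd : ∀ x, BddAbove (Set.range fun t : {t : ℝ // 0 < t} => |phiConv n φ g t.1 x|) := by
    intro x
    refine ⟨∑' j, |lam j| * (2 * K0), ?_⟩
    rintro _ ⟨⟨t, ht⟩, rfl⟩
    have hb : ∀ j, ‖lam j * phiConv n φ (aj n θ j) t x‖ ≤ |lam j| * (2 * K0) := by
      intro j
      rw [norm_mul, Real.norm_eq_abs, Real.norm_eq_abs]
      apply mul_le_mul_of_nonneg_left _ (abs_nonneg _)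
      have h1 : K0 / (1 + ‖x‖) ^ n ≤ K0 := div_le_self hK00 (one_le_pow₀ (by simp))
      have h2 : K0 / (1 + ‖x - zv n j‖) ^ n ≤ K0 := div_le_self hK00 (one_le_pow₀ (by simp))
      linarith [hK0 j t ht x]
    have := tsum_of_norm_bounded (hlam.mul_right (2 * K0)).hasSum hb
    rw [(conv_sum h hθ hlam hg t x).tsum_eq] at this
    exact this
  have pt : ∀ x, ∑' j, ENNReal.ofReal (lam j) * (ENNReal.ofReal c1 *
      (ann2 n K ‖zv n j‖).indicator (fun y => ENNReal.ofReal (ω y / ‖y‖ ^ n)) x) ≤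
      ENNReal.ofReal (Mphi n φ g x * ω x) := by
    intro x
    by_cases hx : 1 < ‖x‖
    swap
    · have : ∀ j, x ∉ ann2 n K ‖zv n j‖ := fun j hj => hx hj.1
      simp [this]
    set t := 2 * ‖x‖ + 2 * √(n:ℝ) with htd
    have ht : 0 < t := by linarith
    have hterm : ∀ j, lam j * (c1 * (ann2 n K ‖zv n j‖).indicator (fun y => ω y / ‖y‖ ^ n) x) ≤
        lam j * phiConv n φ (aj n θ j) t x * (-ω x) := by
      intro j
      obtain ⟨l1, l2⟩ := low h hc hc2 hθ hθsupp hθint ht (x := x) (by linarith) j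
      rw [mul_assoc]
      apply mul_le_mul_of_nonneg_left _ (hpos j)
      by_cases hj : x ∈ ann2 n K ‖zv n j‖
      · rw [indicator_of_mem hj]
        have := hj.2
        rw [l2 (by nlinarith) (by linarith), neg_mul_neg, hc1, div_mul_div_comm, ← mul_pow,
          div_mul_eq_mul_div]
        apply div_le_div_of_nonneg_left (mul_nonneg hc0.le (hω0 x)) (by positivity)
        gcongr
        nlinarith
      · rw [indicator_of_notMem hj]
        have := hω0 x
        nlinarith
    have hs1 := (conv_sum h hθ hlam hg t x).mul_right (-ω x)
    have hnn : ∀ j, 0 ≤ lam j * (c1 * (ann2 n K ‖zv n j‖).indicator (fun y => ω y / ‖y‖ ^ n) x) := by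
      intro j
      have : 0 ≤ (ann2 n K ‖zv n j‖).indicator (fun y => ω y / ‖y‖ ^ n) x :=
        indicator_nonneg (fun y _ => div_nonneg (hω0 y) (by positivity)) x
      have := hpos j
      positivity
    have hs2 : Summable fun j =>
        lam j * (c1 * (ann2 n K ‖zv n j‖).indicator (fun y => ω y / ‖y‖ ^ n) x) :=
      Summable.of_nonneg_of_le hnn hterm hs1.summable
    have hle : ∑' j, lam j * (c1 * (ann2 n K ‖zv n j‖).indicator (fun y => ω y / ‖y‖ ^ n) x) ≤
        Mphi n φ g x * ω x := by
      calc _ ≤ phiConv n φ g t x * (-ω x) := by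
            rw [← hs1.tsum_eq]
            exact hs2.tsum_le_tsum hterm hs1.summable
        _ ≤ |phiConv n φ g t x| * ω x := by
            have := neg_abs_le (phiConv n φ g t x)
            have := hω0 x
            nlinarith
        _ ≤ _ := by
            apply mul_le_mul_of_nonneg_right _ (hω0 x)
            exact le_ciSup (hbdd x) ⟨t, ht⟩
    refine le_trans (le_of_eq ?_) (ENNReal.ofReal_le_ofReal hle)
    rw [ENNReal.ofReal_tsum_of_nonneg hnn hs2]
    congr 1; ext j
    rw [ENNReal.ofReal_mul (hpos j), ENNReal.ofReal_mul hc1pos.le]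
    by_cases hj : x ∈ ann2 n K ‖zv n j‖ <;> simp [hj]
  have hI := (lintegral_mono pt).trans_lt (hfin φ h)
  have m1 : Measurable fun y => ENNReal.ofReal (ω y / ‖y‖ ^ n) := by fun_prop
  have m2 : ∀ j, Measurable
      ((ann2 n K ‖zv n j‖).indicator (fun y => ENNReal.ofReal (ω y / ‖y‖ ^ n))) :=
    fun j => m1.indicator (ann2_meas _ _ _)
  rw [lintegral_tsum (fun j => (((m2 j).const_mul _).const_mul _).aemeasurable)] at hI
  have e : ∀ j, ∫⁻ x, ENNReal.ofReal (lam j) * (ENNReal.ofReal c1 *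
      (ann2 n K ‖zv n j‖).indicator (fun y => ENNReal.ofReal (ω y / ‖y‖ ^ n)) x) =
      ENNReal.ofReal c1 * (ENNReal.ofReal (lam j) *
        ∫⁻ y in ann2 n K ‖zv n j‖, ENNReal.ofReal (ω y / ‖y‖ ^ n)) := by
    intro j
    rw [lintegral_const_mul _ ((m2 j).const_mul _), lintegral_const_mul _ (m2 j),
      lintegral_indicator (ann2_meas _ _ _)]
    ring
  simp_rw [e] at hI
  rw [ENNReal.tsum_mul_left] at hI
  have hI2 : ∑' j, (ENNReal.ofReal (lam j) *
        ∫⁻ y in ann2 n K ‖zv n j‖, ENNReal.ofReal (ω y / ‖y‖ ^ n)) < ⊤ := by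
    by_contra hcon
    rw [not_lt, top_le_iff] at hcon
    rw [hcon, ENNReal.mul_top (by simpa using hc1pos)] at hI
    exact lt_irrefl _ hI
  set T := ENNReal.ofReal (∫ y in unitQ n, ω y) + ENNReal.ofReal (ω 0 * K ^ n) * VB n with hT
  have hTtop : T < ⊤ := ENNReal.add_lt_top.2 ⟨by simp, ENNReal.mul_lt_top (by simp) (VB_top n)⟩
  have hfinal : ∑' j, ENNReal.ofReal (lam j * OmegaFun n ω ‖zv n j‖) < ⊤ := by
    calc _ ≤ ∑' j, (ENNReal.ofReal (lam j) *
          (∫⁻ y in ann2 n K ‖zv n j‖, ENNReal.ofReal (ω y / ‖y‖ ^ n)) + T * ENNReal.ofReal (lam j)) := by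
          apply ENNReal.tsum_le_tsum
          intro j
          rw [ENNReal.ofReal_mul (hpos j), mul_comm T, ← mul_add]
          gcongr
          refine (Om_le hω0 hm hW _).trans ?_
          refine (add_le_add_right (ann_split hω0 hm hW hKpos (norm_nonneg (zv n j))) _).trans ?_
          rw [hT]
          apply le_of_eq; ring
      _ < ⊤ := by
          rw [ENNReal.tsum_add, ENNReal.tsum_mul_left, ← ENNReal.ofReal_tsum_of_nonneg hpos hlam']
          exact ENNReal.add_lt_top.2 ⟨hI2, ENNReal.mul_lt_top hTtop (by simp)⟩
  have := ENNReal.summable_toReal hfinal.ne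
  refine this.congr fun j => ?_
  rw [ENNReal.toReal_ofReal (mul_nonneg (hpos j) (Om_nonneg hω0 _))]

/-- **Proposition (weighted Hardy space criterion for the lattice part).**
Let `ω` be radial nonincreasing with `∫ ω(x)/(1+|x|)^{n+1} dx < ∞`, and let
`g = ∑_j λ_j (χ_{Q_j} - θ)` with `∑_j |λ_j| < ∞`.
(i) If `∑_j |λ_j| Ω(|j|) < ∞` then `g ∈ H^1_ω(ℝ^n)`.
(ii) If the `λ_j` are nonnegative and `g ∈ H^1_ω(ℝ^n)`, then `∑_j λ_j Ω(|j|) < ∞`. -/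
theorem weighted_lattice_part (n : ℕ) (hn : 1 ≤ n) (θ : En n → ℝ)
    (hθmeas : Measurable θ) (hθbdd : ∃ C, ∀ x, |θ x| ≤ C)
    (hθsupp : ∀ x, x ∉ unitQ n → θ x = 0) (hθint : (∫ x, θ x) = 1)
    (ω : En n → ℝ) (hω0 : ∀ x, 0 ≤ ω x)
    (w : ℝ → ℝ) (hrad : ∀ x, ω x = w ‖x‖) (hmono : AntitoneOn w (Set.Ici 0))
    (hωint : ∫⁻ x, ENNReal.ofReal (ω x / (1 + ‖x‖) ^ (n + 1)) < ⊤)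
    (lam : (Fin n → ℤ) → ℝ) (hlam : Summable (fun j => |lam j|))
    (g : En n → ℝ)
    (hg : ∀ x, g x = ∑' j : Fin n → ℤ,
      lam j * ((Qk n j).indicator (1 : En n → ℝ) x - θ x)) :
    (Summable (fun j => |lam j| * OmegaFun n ω ‖zv n j‖) →
      ∀ φ : En n → ℝ, IsTestFun n φ →
        ∫⁻ x, ENNReal.ofReal (Mphi n φ g x * ω x) < ⊤) ∧
    ((∀ j, 0 ≤ lam j) →
      (∀ φ : En n → ℝ, IsTestFun n φ →
        ∫⁻ x, ENNReal.ofReal (Mphi n φ g x * ω x) < ⊤) →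
      Summable (fun j => lam j * OmegaFun n ω ‖zv n j‖)) := by
  obtain ⟨C, hC⟩ := hθbdd
  have hθ := th_int hθmeas hC hθsupp
  exact ⟨fun hS φ h => part_i hn h hθ hC hθsupp hθint hω0 hrad hmono hlam hg hS,
    fun hpos hfin => part_ii hn hθ hC hθsupp hθint hω0 hrad hmono hlam hg hpos hfin⟩
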